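/- Let ℳ be a finite family of models containing a reference model 0, and ζ a probability distribution on ℳ. Let 𝔄 be a T-episode algorithm and let exit be an exit criterion assigning to every partial transcript τ^{(1:t)} (1 ≤ t < T) a value in {TRUE, FALSE}. Define the stopping time 𝖳(τ^{(1:T)}) := min( {t < T : exit(τ^{(1:t)}) = TRUE} ∪ {T} ) and let Φ be the corresponding truncation map into X := ⊔_{t=1}^T ((𝒪×𝒜)^H)^t. Then TV( Φ_*(E_{M∼ζ}[ℙ_M^𝔄]), Φ_*ℙ_0^𝔄 ) ≥ TV( E_{M∼ζ}[ℙ_M^𝔄], ℙ_0^𝔄 ) − ℙ_0^𝔄( ∃ t < T : exit(τ^{(1:t)}) = TRUE ). -/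

import Mathlib

noncomputable section

/-- A model of a sequential decision process: for every partial history `τ_{h−1}` (a list of
observation–action pairs), a distribution `ℙ_M(o_h = · | τ_{h−1})` over the next
observation. -/
structure SDModel (O A : Type) [Fintype O] where
  obs : List (O × A) → O → ℝ
  obs_nonneg : ∀ τ o, 0 ≤ obs τ o
  obs_sum : ∀ τ, ∑ o, obs τ o = 1

namespace SDModel

variable {O A : Type} [Fintype O] [Fintype A] {H T : ℕ}

/-- `ℙ_M(τ) = Π_{h'≤H} ℙ_M(o_{h'} | τ_{h'−1})` for a full episode trajectory `τ`. -/
def trajProb (M : SDModel O A) (τ : Fin H → O × A) : ℝ :=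
  ∏ h : Fin H, M.obs ((List.ofFn τ).take h.1) (τ h).1

end SDModel

/-- A `T`-episode algorithm: a distribution over actions for every tuple of past episode
trajectories, within-episode history, and current observation. -/
structure SDAlg (O A : Type) [Fintype A] (H : ℕ) where
  act : List (Fin H → O × A) → List (O × A) → O → A → ℝ
  act_nonneg : ∀ past hist o a, 0 ≤ act past hist o a
  act_sum : ∀ past hist o, ∑ a, act past hist o a = 1

namespace SDModel

variable {O A : Type} [Fintype O] [Fintype A] {H T : ℕ}

/-- The transcript law `ℙ_M^𝔄(τ^{(1:T)})`. -/
def transcriptProb (M : SDModel O A) (𝔄 : SDAlg O A H)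
    (τs : Fin T → Fin H → O × A) : ℝ :=
  ∏ t : Fin T, ∏ h : Fin H,
    M.obs ((List.ofFn (τs t)).take h.1) ((τs t) h).1 *
      𝔄.act ((List.ofFn τs).take t.1) ((List.ofFn (τs t)).take h.1) ((τs t) h).1 ((τs t) h).2

end SDModel

open Classical in
/-- The pushforward `Φ_* p` of a probability mass function `p` on transcripts under a
truncation map `Φ` (the truncated transcripts, elements of `⊔_{t=1}^T ((𝒪×𝒜)^H)^t`, are
encoded as lists of episode trajectories of length between `1` and `T`). -/
def pushTrunc {O A : Type} [Fintype O] [Fintype A] {H T : ℕ}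
    (Φ : (Fin T → Fin H → O × A) → List (Fin H → O × A))
    (p : (Fin T → Fin H → O × A) → ℝ) : List (Fin H → O × A) → ℝ :=
  fun l => ∑ τs : Fin T → Fin H → O × A, if Φ τs = l then p τs else 0

/-- The chi-squared divergence `χ²(p‖q) = Σ_x p(x)²/q(x) − 1` of probability mass
functions. -/
def chiSqDiv {X : Type*} (p q : X → ℝ) : ℝ := (∑' x, p x ^ 2 / q x) - 1

/-- The total variation distance `(1/2)·Σ_x |p(x) − q(x)|` of probability mass functions. -/
def tvDistPMF {X : Type*} (p q : X → ℝ) : ℝ := (1 / 2) * ∑' x, |p x - q x|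

open Classical in
/-- The stopping time `𝖳 = min({t < T : exit(τ^{(1:t)}) = TRUE} ∪ {T})` induced by an exit
criterion. -/
def exitStopTime {O A : Type} [Fintype O] [Fintype A] {H : ℕ} (T : ℕ)
    (exit : List (Fin H → O × A) → Bool) (τs : Fin T → Fin H → O × A) : ℕ :=
  if h : ∃ t, 1 ≤ t ∧ t < T ∧ exit ((List.ofFn τs).take t) = true then Nat.find h else T

/-!
A transcript on which the exit criterion never fires before episode `T` is left untouched by the
truncation map `Φ`, while every other transcript is cut to length `< T`. So a fibre of `Φ` either is
a single transcript, on which no mass cancels, or lies inside the exit event `E`. On a fibre inside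
`E`, writing `f = p - q` for the signed difference of the two laws, `|f| = f + 2 f⁻` shows that
replacing `∑ |f|` by `|∑ f|` loses at most `2 ∑ f⁻`; and `f⁻ = (p - q)⁻ ≤ q`. The total loss in
`∑ |p - q|` is therefore at most `2 q(E)`, which is `q(E)` in total variation.
-/

section AbsSum

variable {ι κ G : Type*} [AddCommGroup G] [LinearOrder G] [IsOrderedAddMonoid G]

theorem sum_abs_le_abs_sum_add_two_nsmul_sum_negPart (s : Finset ι) (f : ι → G) :
    ∑ i ∈ s, |f i| ≤ |∑ i ∈ s, f i| + 2 • ∑ i ∈ s, (f i)⁻ :=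
  calc
    ∑ i ∈ s, |f i| = ∑ i ∈ s, (f i + 2 • (f i)⁻) :=
      Finset.sum_congr rfl fun i _ => by rw [← abs_sub_eq_two_nsmul_negPart, add_sub_cancel]
    _ = ∑ i ∈ s, f i + 2 • ∑ i ∈ s, (f i)⁻ := by
      rw [Finset.sum_add_distrib, Finset.sum_nsmul]
    _ ≤ |∑ i ∈ s, f i| + 2 • ∑ i ∈ s, (f i)⁻ := by gcongr; exact le_abs_self _

theorem sum_abs_le_sum_abs_fiberwise_add_two_nsmul_sum_negPart [DecidableEq κ] {s : Finset ι}
    {t : Finset κ} {g : ι → κ} (hst : ∀ i ∈ s, g i ∈ t) {E : ι → Prop} [DecidablePred E]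
    (hE : ∀ i ∈ s, ¬ E i → ∀ j ∈ s, g j = g i → j = i) (f : ι → G) :
    ∑ i ∈ s, |f i| ≤ ∑ k ∈ t, |∑ i ∈ s with g i = k, f i| + 2 • ∑ i ∈ s with E i, (f i)⁻ := by
  have fiber_bound (k : κ) : ∑ i ∈ s with g i = k, |f i| ≤
      |∑ i ∈ s with g i = k, f i| + 2 • ∑ i ∈ s with g i = k, if E i then (f i)⁻ else 0 := by
    by_cases hk : ∀ i ∈ s, g i = k → E i
    · rw [Finset.sum_congr rfl fun i hi => if_pos (hk i (Finset.mem_filter.1 hi).1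
        (Finset.mem_filter.1 hi).2)]
      exact sum_abs_le_abs_sum_add_two_nsmul_sum_negPart _ f
    · push Not at hk
      obtain ⟨i, his, rfl, hi⟩ := hk
      have fiber_eq : {j ∈ s | g j = g i} = {i} := by
        ext j
        rw [Finset.mem_filter, Finset.mem_singleton]
        exact ⟨fun hj => hE i his hi j hj.1 hj.2, by rintro rfl; exact ⟨his, rfl⟩⟩
      simp only [fiber_eq, Finset.sum_singleton, if_neg hi, smul_zero, add_zero, le_refl]
  calc
    ∑ i ∈ s, |f i| = ∑ k ∈ t, ∑ i ∈ s with g i = k, |f i| :=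
      (Finset.sum_fiberwise_of_maps_to hst _).symm
    _ ≤ ∑ k ∈ t, (|∑ i ∈ s with g i = k, f i| +
          2 • ∑ i ∈ s with g i = k, if E i then (f i)⁻ else 0) :=
      Finset.sum_le_sum fun k _ => fiber_bound k
    _ = ∑ k ∈ t, |∑ i ∈ s with g i = k, f i| + 2 • ∑ i ∈ s with E i, (f i)⁻ := by
      rw [Finset.sum_add_distrib, Finset.sum_nsmul, Finset.sum_fiberwise_of_maps_to hst,
        Finset.sum_filter]

theorem negPart_sub_le_right {a b : G} (ha : 0 ≤ a) (hb : 0 ≤ b) : (a - b)⁻ ≤ b := by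
  rw [negPart_def, neg_sub]
  exact sup_le (sub_le_self b ha) hb

end AbsSum

theorem tvDistPMF_eq_sum {X : Type*} {p q : X → ℝ} (s : Finset X) (hpq : ∀ x ∉ s, p x = q x) :
    tvDistPMF p q = (1 / 2) * ∑ x ∈ s, |p x - q x| := by
  rw [tvDistPMF, tsum_eq_sum fun x hx => by rw [hpq x hx, sub_self, abs_zero]]

theorem SDModel.transcriptProb_nonneg {O A : Type} [Fintype O] [Fintype A] {H T : ℕ}
    (M : SDModel O A) (𝔄 : SDAlg O A H) (τs : Fin T → Fin H → O × A) :
    0 ≤ M.transcriptProb 𝔄 τs :=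
  Finset.prod_nonneg fun _ _ => Finset.prod_nonneg fun _ _ =>
    mul_nonneg (M.obs_nonneg _ _) (𝔄.act_nonneg _ _ _ _)

section Truncation

variable {O A : Type} [Fintype O] [Fintype A] {H T : ℕ}

open Classical in
theorem pushTrunc_apply (Φ : (Fin T → Fin H → O × A) → List (Fin H → O × A))
    (p : (Fin T → Fin H → O × A) → ℝ) (l : List (Fin H → O × A)) :
    pushTrunc Φ p l = ∑ τs with Φ τs = l, p τs :=
  (Finset.sum_filter _ _).symm

open Classical in
theorem tvDistPMF_pushTrunc (Φ : (Fin T → Fin H → O × A) → List (Fin H → O × A))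
    (p q : (Fin T → Fin H → O × A) → ℝ) :
    tvDistPMF (pushTrunc Φ p) (pushTrunc Φ q) =
      (1 / 2) * ∑ l ∈ Finset.univ.image Φ, |∑ τs with Φ τs = l, (p τs - q τs)| := by
  rw [tvDistPMF_eq_sum (Finset.univ.image Φ)]
  · simp only [pushTrunc_apply, Finset.sum_sub_distrib]
  · intro l hl
    have fiber_empty : ({τs | Φ τs = l} : Finset (Fin T → Fin H → O × A)) = ∅ :=
      Finset.filter_eq_empty_iff.2 fun τs _ hτs =>
        hl (Finset.mem_image.2 ⟨τs, Finset.mem_univ τs, hτs⟩)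
    simp only [pushTrunc_apply, fiber_empty, Finset.sum_empty]

open Classical in
theorem tvDistPMF_sub_le_tvDistPMF_pushTrunc
    {Φ : (Fin T → Fin H → O × A) → List (Fin H → O × A)}
    {p q : (Fin T → Fin H → O × A) → ℝ} (hp : ∀ τs, 0 ≤ p τs) (hq : ∀ τs, 0 ≤ q τs)
    {E : (Fin T → Fin H → O × A) → Prop} [DecidablePred E]
    (hE : ∀ τs, ¬ E τs → ∀ τs', Φ τs' = Φ τs → τs' = τs) :
    tvDistPMF p q - ∑ τs with E τs, q τs ≤ tvDistPMF (pushTrunc Φ p) (pushTrunc Φ q) := by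
  have sum_abs_le :
      ∑ τs, |p τs - q τs| ≤
        ∑ l ∈ Finset.univ.image Φ, |∑ τs with Φ τs = l, (p τs - q τs)| +
          2 • ∑ τs with E τs, (p τs - q τs)⁻ :=
    sum_abs_le_sum_abs_fiberwise_add_two_nsmul_sum_negPart
      (fun _ => Finset.mem_image_of_mem Φ) (fun τs _ hτs τs' _ => hE τs hτs τs') _
  have sum_negPart_le : ∑ τs with E τs, (p τs - q τs)⁻ ≤ ∑ τs with E τs, q τs :=
    Finset.sum_le_sum fun τs _ => negPart_sub_le_right (hp τs) (hq τs)
  rw [two_nsmul] at sum_abs_le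
  rw [tvDistPMF_pushTrunc, tvDistPMF, tsum_fintype]
  linarith

/-- The event `∃ t < T, exit(τ^{(1:t)}) = TRUE` that the exit criterion fires before the last
episode. -/
def ExitsEarly (exit : List (Fin H → O × A) → Bool) (τs : Fin T → Fin H → O × A) : Prop :=
  ∃ t, 1 ≤ t ∧ t < T ∧ exit ((List.ofFn τs).take t) = true

/-- The truncation map `Φ`, sending `τ^{(1:T)}` to its prefix of length
`𝖳(τ^{(1:T)})`, encoded as a list of episodes. -/
def truncateAtExit (exit : List (Fin H → O × A) → Bool) (τs : Fin T → Fin H → O × A) :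
    List (Fin H → O × A) :=
  (List.ofFn τs).take (exitStopTime T exit τs)

variable {exit : List (Fin H → O × A) → Bool}

theorem truncateAtExit_of_not_exitsEarly {τs : Fin T → Fin H → O × A}
    (hτs : ¬ ExitsEarly exit τs) : truncateAtExit exit τs = List.ofFn τs := by
  have stopTime_eq : exitStopTime T exit τs = T := dif_neg hτs
  rw [truncateAtExit, stopTime_eq, List.take_of_length_le List.length_ofFn.le]

theorem eq_of_truncateAtExit_eq_of_not_exitsEarly {τs τs' : Fin T → Fin H → O × A}
    (hτs : ¬ ExitsEarly exit τs) (h : truncateAtExit exit τs' = truncateAtExit exit τs) :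
    τs' = τs := by
  rw [truncateAtExit_of_not_exitsEarly hτs] at h
  have sublist : (List.ofFn τs).Sublist (List.ofFn τs') := h ▸ List.take_sublist _ _
  have ofFn_eq : List.ofFn τs = List.ofFn τs' :=
    sublist.eq_of_length (by rw [List.length_ofFn, List.length_ofFn])
  exact List.ofFn_injective ofFn_eq.symm

open Classical in
theorem tv_truncation_lower_bound_general {p q : (Fin T → Fin H → O × A) → ℝ}
    (hp : ∀ τs, 0 ≤ p τs) (hq : ∀ τs, 0 ≤ q τs) :
    tvDistPMF p q - (∑ τs, if ExitsEarly exit τs then q τs else 0) ≤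
      tvDistPMF (pushTrunc (truncateAtExit exit) p) (pushTrunc (truncateAtExit exit) q) := by
  rw [← Finset.sum_filter]
  exact tvDistPMF_sub_le_tvDistPMF_pushTrunc hp hq fun _ hτs _ =>
    eq_of_truncateAtExit_eq_of_not_exitsEarly hτs

end Truncation

open Classical in
/-- **Lemma A.6 (early stopping perturbs the TV distance by at most the exit
probability).** For any exit criterion `exit`, with `𝖳` the induced stopping time and `Φ`
the corresponding truncation map,
`TV(Φ_*(E_{M∼ζ}[ℙ_M^𝔄]), Φ_*ℙ_0^𝔄) ≥ TV(E_{M∼ζ}[ℙ_M^𝔄], ℙ_0^𝔄) − ℙ_0^𝔄(∃ t < T, exit(τ^{(1:t)}))`. -/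
theorem tv_truncation_lower_bound {O A : Type} [Fintype O] [Fintype A]
    [Nonempty O] [Nonempty A] (H T : ℕ) (hH : 1 ≤ H) (hT : 1 ≤ T)
    {ι : Type} [Fintype ι] (Mdl : ι → SDModel O A) (M0 : SDModel O A)
    (h0 : ∃ i, Mdl i = M0)
    (ζ : ι → ℝ) (hζ0 : ∀ i, 0 ≤ ζ i) (hζ1 : ∑ i, ζ i = 1)
    (𝔄 : SDAlg O A H) (exit : List (Fin H → O × A) → Bool) :
    tvDistPMF
        (fun τs : Fin T → Fin H → O × A => ∑ i, ζ i * (Mdl i).transcriptProb 𝔄 τs)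
        (fun τs : Fin T → Fin H → O × A => M0.transcriptProb 𝔄 τs) -
      (∑ τs : Fin T → Fin H → O × A,
        if ∃ t, 1 ≤ t ∧ t < T ∧ exit ((List.ofFn τs).take t) = true then
          M0.transcriptProb 𝔄 τs
        else 0) ≤
    tvDistPMF
        (pushTrunc (fun τs => (List.ofFn τs).take (exitStopTime T exit τs))
          (fun τs => ∑ i, ζ i * (Mdl i).transcriptProb 𝔄 τs))
        (pushTrunc (fun τs => (List.ofFn τs).take (exitStopTime T exit τs))
          (fun τs => M0.transcriptProb 𝔄 τs)) :=
  tv_truncation_lower_bound_general (exit := exit)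
    (fun τs => Finset.sum_nonneg fun i _ => mul_nonneg (hζ0 i) ((Mdl i).transcriptProb_nonneg 𝔄 τs))
    (M0.transcriptProb_nonneg 𝔄)
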